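/- arXiv:1403.7498 — 2 statements merged into one kernel-verified Lean document; each statement's English description precedes it below -/
import Mathlib

section
/- For every pair (α,β) of random strategies of the two players and every ω = (ω₁,ω₂) ∈ Ω_α × Ω_β, there exists a unique (up to a.e. equality) pair of controls (u_ω, v_ω) ∈ 𝒰(t₀)×𝒱(t₀) such that α(ω₁, v_ω) = u_ω and β(ω₂, u_ω) = v_ω almost everywhere on [t₀,1]. Moreover, the map ρ : Ω_α × Ω_β → 𝒰(t₀)×𝒱(t₀), ω ↦ (u_ω, v_ω), is measurable with respect to the product σ-field ℱ_α ⊗ ℱ_β on the domain and the Borel σ-field of the L¹ topology on the codomain. -/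
open MeasureTheory

/-- The set of controls with values in `U` on the interval `[t₀, 1]`:
Lebesgue-measurable maps `ℝ → U` (restricted to `[t₀,1]`). -/
def Control (t₀ : ℝ) (U : Type*) [MeasurableSpace U] : Type _ :=
  {u : ℝ → U // Measurable u}

/-- The `L¹` pseudodistance between two controls:
`d(u, u') = ∫_{t₀}^1 d_U (u t, u' t) dt`. -/
noncomputable def ctrlDist {t₀ : ℝ} {U : Type*} [MeasurableSpace U] [MetricSpace U]
    (u v : Control t₀ U) : ℝ :=
  ∫ t in Set.Icc t₀ 1, dist (u.1 t) (v.1 t)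

/-- The Borel σ-field of the topology of `L¹`-convergence on the set of controls.
Since `U` is a separable metric space, the `L¹` pseudometric topology on controls is
separable, so its Borel σ-field is generated by the open balls. -/
noncomputable instance ControlMeasurableSpace {t₀ : ℝ} {U : Type*} [MeasurableSpace U]
    [MetricSpace U] : MeasurableSpace (Control t₀ U) :=
  MeasurableSpace.generateFrom
    {S | ∃ (c : Control t₀ U) (r : ℝ), S = {u | ctrlDist c u < r}}

/-- A random strategy for the player who observes the opponent's controls (with values
in `A`) and answers with controls with values in `B`.  The underlying probability space
is `([0,1]^n, Borel, Lebesgue)` for some `n ≥ 1`, modelled on `Fin n → ℝ`;  the map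
`α : Ω × 𝒱(t₀) → 𝒰(t₀)` is measurable (controls carrying the Borel σ-field of the `L¹`
topology), and there is a finite partition `t₀ = s 0 < ⋯ < s N = 1` such that for every
`ω`, if two controls of the opponent agree a.e. on `[s 0, s m]` then the two answers
agree a.e. on `[s 0, s (m+1)]`. -/
structure RandStrategy (t₀ : ℝ) (A B : Type*)
    [MeasurableSpace A] [MetricSpace A] [MeasurableSpace B] [MetricSpace B] where
  n : ℕ
  npos : 0 < n
  toFun : (Fin n → ℝ) → Control t₀ A → Control t₀ B
  measurable_toFun : Measurable fun z : (Fin n → ℝ) × Control t₀ A => toFun z.1 z.2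
  N : ℕ
  Npos : 0 < N
  s : ℕ → ℝ
  s_zero : s 0 = t₀
  s_last : s N = 1
  s_mono : ∀ m < N, s m < s (m + 1)
  nonanticipative : ∀ m < N, ∀ ω : Fin n → ℝ, ∀ v₁ v₂ : Control t₀ A,
    (v₁.1 =ᵐ[volume.restrict (Set.Icc t₀ (s m))] v₂.1) →
    ((toFun ω v₁).1 =ᵐ[volume.restrict (Set.Icc t₀ (s (m + 1)))] (toFun ω v₂).1)

/-- a partition point bracket around `τ`. -/
theorem RandStrategy.exists_bracket {t₀ : ℝ} {A B : Type*}
    [MeasurableSpace A] [MetricSpace A] [MeasurableSpace B] [MetricSpace B]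
    (α : RandStrategy t₀ A B) {τ : ℝ} (h0 : t₀ ≤ τ) (h1 : τ < 1) :
    ∃ m < α.N, α.s m ≤ τ ∧ τ < α.s (m + 1) := by
  by_contra! h
  have key : ∀ m, m ≤ α.N → α.s m ≤ τ := by
    intro m
    induction m with
    | zero => intro _; rw [α.s_zero]; exact h0
    | succ k ih => intro hk; exact h k (by omega) (ih (by omega))
  have := key α.N le_rfl
  rw [α.s_last] at this
  linarith

theorem ae_mono_Icc {t₀ a b : ℝ} {A : Type*} {f g : ℝ → A} (hab : a ≤ b)
    (h : f =ᵐ[volume.restrict (Set.Icc t₀ b)] g) :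
    f =ᵐ[volume.restrict (Set.Icc t₀ a)] g :=
  ae_mono (Measure.restrict_mono (Set.Icc_subset_Icc le_rfl hab) le_rfl) h

theorem RandStrategy.s_le_one {t₀ : ℝ} {A B : Type*}
    [MeasurableSpace A] [MetricSpace A] [MeasurableSpace B] [MetricSpace B]
    (α : RandStrategy t₀ A B) {m : ℕ} (hm : m ≤ α.N) : α.s m ≤ 1 := by
  have key : ∀ k, m ≤ k → k ≤ α.N → α.s m ≤ α.s k := by
    intro k hk
    induction k, hk using Nat.le_induction with
    | base => intro _; exact le_rfl
    | succ k hk ih => intro h; exact (ih (by omega)).trans (α.s_mono k (by omega)).le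
  rw [← α.s_last]
  exact key _ hm le_rfl

theorem RandStrategy.congr_ae {t₀ : ℝ} {A B : Type*}
    [MeasurableSpace A] [MetricSpace A] [MeasurableSpace B] [MetricSpace B]
    (α : RandStrategy t₀ A B) (ω : Fin α.n → ℝ) {v w : Control t₀ A}
    (h : v.1 =ᵐ[volume.restrict (Set.Icc t₀ 1)] w.1) :
    (α.toFun ω v).1 =ᵐ[volume.restrict (Set.Icc t₀ 1)] (α.toFun ω w).1 := by
  have hN := α.Npos
  have := α.nonanticipative (α.N - 1) (by omega) ω v w
    (ae_mono_Icc (α.s_le_one (by omega)) h)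
  rwa [show α.N - 1 + 1 = α.N by omega, α.s_last] at this

/-- One step of the simultaneous best-reply iteration. -/
def stratStep {t₀ : ℝ} {U V : Type*} [MeasurableSpace U] [MetricSpace U]
    [MeasurableSpace V] [MetricSpace V]
    (α : RandStrategy t₀ V U) (β : RandStrategy t₀ U V)
    (ω : (Fin α.n → ℝ) × (Fin β.n → ℝ)) (x : Control t₀ U × Control t₀ V) :
    Control t₀ U × Control t₀ V :=
  (α.toFun ω.1 x.2, β.toFun ω.2 x.1)

/-- Agreement of pairs of controls up to time `τ`. -/
def Agree {t₀ : ℝ} {U V : Type*} [MeasurableSpace U] [MeasurableSpace V] (τ : ℝ)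
    (x y : Control t₀ U × Control t₀ V) : Prop :=
  x.1.1 =ᵐ[volume.restrict (Set.Icc t₀ τ)] y.1.1 ∧
  x.2.1 =ᵐ[volume.restrict (Set.Icc t₀ τ)] y.2.1

theorem stratStep_contract {t₀ : ℝ} {U V : Type*} [MeasurableSpace U] [MetricSpace U]
    [MeasurableSpace V] [MetricSpace V] (ht : t₀ ≤ 1)
    (α : RandStrategy t₀ V U) (β : RandStrategy t₀ U V) :
    ∃ K : ℕ, ∀ ω x y, Agree 1 ((stratStep α β ω)^[K] x) ((stratStep α β ω)^[K] y) := by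
  classical
  let S : Finset ℝ := (Finset.range (α.N + 1)).image α.s ∪ (Finset.range (β.N + 1)).image β.s
  have main : ∀ n ω x y, ∃ τ, t₀ ≤ τ ∧ τ ≤ 1 ∧
      Agree τ ((stratStep α β ω)^[n] x) ((stratStep α β ω)^[n] y) ∧
      (τ = 1 ∨ n ≤ (S.filter (· ≤ τ)).card) := by
    intro n ω x y
    induction n with
    | zero =>
      refine ⟨t₀, le_rfl, ht, ?_, Or.inr (Nat.zero_le _)⟩
      constructor <;>
      · rw [Set.Icc_self, Measure.restrict_singleton]
        simp [Filter.EventuallyEq]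
    | succ n ih =>
      obtain ⟨τ, h0, h1, hA, hc⟩ := ih
      rw [Function.iterate_succ_apply', Function.iterate_succ_apply']
      rcases h1.eq_or_lt with h | h
      · subst h
        exact ⟨1, h0, le_rfl, ⟨α.congr_ae _ hA.2, β.congr_ae _ hA.1⟩, Or.inl rfl⟩
      · obtain ⟨m, hm, ha, hb⟩ := α.exists_bracket h0 h
        obtain ⟨k, hk, hc', hd⟩ := β.exists_bracket h0 h
        have hlt : τ < min (α.s (m+1)) (β.s (k+1)) := lt_min hb hd
        refine ⟨min (α.s (m+1)) (β.s (k+1)), h0.trans hlt.le,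
          (min_le_left _ _).trans (α.s_le_one (by omega)), ⟨?_, ?_⟩, Or.inr ?_⟩
        · exact ae_mono_Icc (min_le_left _ _)
            (α.nonanticipative m hm _ _ _ (ae_mono_Icc ha hA.2))
        · exact ae_mono_Icc (min_le_right _ _)
            (β.nonanticipative k hk _ _ _ (ae_mono_Icc hc' hA.1))
        · have hn := hc.resolve_left h.ne
          refine Nat.succ_le_of_lt (hn.trans_lt (Finset.card_lt_card ?_))
          have hmem : min (α.s (m+1)) (β.s (k+1)) ∈ S := by
            rcases min_choice (α.s (m+1)) (β.s (k+1)) with e | e <;> rw [e]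
            · exact Finset.mem_union_left _
                (Finset.mem_image_of_mem _ (Finset.mem_range.2 (by omega)))
            · exact Finset.mem_union_right _
                (Finset.mem_image_of_mem _ (Finset.mem_range.2 (by omega)))
          refine (Finset.ssubset_iff_of_subset ?_).2
            ⟨_, Finset.mem_filter.2 ⟨hmem, le_rfl⟩, ?_⟩
          · intro p hp
            rw [Finset.mem_filter] at hp ⊢
            exact ⟨hp.1, hp.2.trans hlt.le⟩
          · intro hp
            exact absurd (Finset.mem_filter.1 hp).2 (not_le.2 hlt)
  refine ⟨S.card + 1, fun ω x y => ?_⟩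
  obtain ⟨τ, _, _, hA, h | h⟩ := main (S.card + 1) ω x y
  · rwa [h] at hA
  · have := Finset.card_filter_le S (· ≤ τ)
    omega

/-- For every pair `(α, β)` of random strategies and every `ω = (ω₁, ω₂) ∈ Ω_α × Ω_β`
there is a unique (up to a.e. equality) pair of controls `(u_ω, v_ω)` with
`α (ω₁, v_ω) = u_ω` and `β (ω₂, u_ω) = v_ω` a.e. on `[t₀,1]`; moreover the selection
`ρ : ω ↦ (u_ω, v_ω)` is measurable for the product σ-field on `Ω_α × Ω_β` and the Borel
σ-field of the `L¹` topology on `𝒰(t₀) × 𝒱(t₀)`. -/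
theorem random_strategies_fixed_point
    {U V : Type*} [MeasurableSpace U] [MetricSpace U] [BorelSpace U]
    [MeasurableSpace V] [MetricSpace V] [BorelSpace V]
    [Nonempty U] [Nonempty V]
    [TopologicalSpace.SeparableSpace U] [TopologicalSpace.SeparableSpace V]
    [BoundedSpace U] [BoundedSpace V]
    {t₀ : ℝ} (ht₀ : t₀ ∈ Set.Ico (0 : ℝ) 1)
    (α : RandStrategy t₀ V U) (β : RandStrategy t₀ U V) :
    ∃ ρ : (Fin α.n → ℝ) × (Fin β.n → ℝ) → Control t₀ U × Control t₀ V,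
      Measurable ρ ∧
      ∀ ω : (Fin α.n → ℝ) × (Fin β.n → ℝ),
        ((α.toFun ω.1 (ρ ω).2).1 =ᵐ[volume.restrict (Set.Icc t₀ 1)] (ρ ω).1.1 ∧
         (β.toFun ω.2 (ρ ω).1).1 =ᵐ[volume.restrict (Set.Icc t₀ 1)] (ρ ω).2.1) ∧
        (∀ (u' : Control t₀ U) (v' : Control t₀ V),
          (α.toFun ω.1 v').1 =ᵐ[volume.restrict (Set.Icc t₀ 1)] u'.1 →
          (β.toFun ω.2 u').1 =ᵐ[volume.restrict (Set.Icc t₀ 1)] v'.1 →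
          ((ρ ω).1.1 =ᵐ[volume.restrict (Set.Icc t₀ 1)] u'.1 ∧
           (ρ ω).2.1 =ᵐ[volume.restrict (Set.Icc t₀ 1)] v'.1)) := by
  obtain ⟨K, hK⟩ := stratStep_contract ht₀.2.le α β
  obtain ⟨a⟩ := ‹Nonempty U›
  obtain ⟨b⟩ := ‹Nonempty V›
  let x₀ : Control t₀ U × Control t₀ V :=
    (⟨fun _ => a, measurable_const⟩, ⟨fun _ => b, measurable_const⟩)
  refine ⟨fun ω => (stratStep α β ω)^[K] x₀, ?_, fun ω => ⟨?_, ?_⟩⟩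
  · clear hK
    induction K with
    | zero => exact measurable_const
    | succ n ih =>
      simp only [Function.iterate_succ_apply']
      exact (α.measurable_toFun.comp (measurable_fst.prodMk ih.snd)).prodMk (β.measurable_toFun.comp (measurable_snd.prodMk ih.fst))
  · have h := hK ω (stratStep α β ω x₀) x₀
    rw [← Function.iterate_succ_apply, Function.iterate_succ_apply'] at h
    exact h
  · intro u' v' hu hv
    have hz : ∀ n, Agree 1 ((stratStep α β ω)^[n] (u', v')) (u', v') := by
      intro n
      induction n with
      | zero => exact ⟨Filter.EventuallyEq.rfl, Filter.EventuallyEq.rfl⟩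
      | succ n ih =>
        rw [Function.iterate_succ_apply']
        exact ⟨(α.congr_ae ω.1 ih.2).trans hu, (β.congr_ae ω.2 ih.1).trans hv⟩
    have h := hK ω x₀ (u', v')
    exact ⟨h.1.trans (hz K).1, h.2.trans (hz K).2⟩
end

section
/- Let u : Δ(K×L) → ℝ be continuous and let W : Δ(K×L) → ℝ be Lipschitz continuous and L-convex, i.e. q ↦ W(q⊗P) is convex on Δ(L) for every P ∈ Δ(K)^L. Assume that for every P ∈ Δ(K)^L, the concave function η ↦ W_L^♭(P,η) := inf_{q∈Δ(L)} W(q⊗P) + ⟨q,η⟩ is a viscosity super-solution on ℝ^L of −w(η) + ⟨Dw(η),η⟩ + u_L(P,Dw(η)) ≤ 0, meaning: for every C¹ function φ : ℝ^L → ℝ such that W_L^♭(P,·) − φ has a local minimum at η ∈ ℝ^L, one has −W_L^♭(P,η) + ⟨Dφ(η),η⟩ + u(Dφ(η) ⊗ P) ≤ 0. If, for some P₀ ∈ Δ(K)^L, the map η ↦ W_L^♭(P₀,η) is differentiable at η₀ ∈ ℝ^L, then q₀ := ∇_η W_L^♭(P₀,η₀) belongs to Δ(L) and W(q₀⊗P₀)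 ≥ u(q₀⊗P₀). -/
/-- `q ⊗ P ∈ Δ(K×L)`: `(q ⊗ P)(k,ℓ) = q(ℓ) P(ℓ)(k)`. -/
def tensLP {K L : Type*} (q : L → ℝ) (P : L → K → ℝ) : (K × L) → ℝ :=
  fun kl => q kl.2 * P kl.2 kl.1

/-- `W_L^♭(P, η) = inf_{q ∈ Δ(L)} W(q⊗P) + ⟨q, η⟩`. -/
noncomputable def WflatL {K L : Type*} [Fintype L]
    (W : ((K × L) → ℝ) → ℝ) (P : L → K → ℝ) (η : L → ℝ) : ℝ :=
  sInf ((fun q => W (tensLP q P) + ∑ l, q l * η l) '' stdSimplex ℝ L)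

open Filter Topology

lemma aux_touch {L : Type*} [Fintype L] (ψ : (L → ℝ) → ℝ) (η q : L → ℝ)
    (hd : DifferentiableAt ℝ ψ η)
    (hm : IsLocalMin (fun z : L → ℝ => ∑ l, q l * z l - ψ z) η) (v : L → ℝ) :
    fderiv ℝ ψ η v = ∑ l, q l * v l := by
  let A : (L → ℝ) →L[ℝ] ℝ := ∑ l, q l • ContinuousLinearMap.proj l
  have hA : ∀ z, A z = ∑ l, q l * z l := by
    intro z
    simp [A]
  have h1 : HasFDerivAt (fun z : L → ℝ => A z - ψ z) (A - fderiv ℝ ψ η) η :=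
    A.hasFDerivAt.sub hd.hasFDerivAt
  simp only [hA] at h1
  have h2 := hm.hasFDerivAt_eq_zero h1
  have h3 : A = fderiv ℝ ψ η := sub_eq_zero.mp h2
  rw [← h3, hA]

lemma aux_tens {K L : Type*} [Fintype K] [Fintype L] (P : L → K → ℝ)
    (hP : ∀ l, P l ∈ stdSimplex ℝ K) (q : L → ℝ) (hq : q ∈ stdSimplex ℝ L) :
    tensLP q P ∈ stdSimplex ℝ (K × L) := by
  refine ⟨fun kl => mul_nonneg (hq.1 _) ((hP _).1 _), ?_⟩
  rw [Fintype.sum_prod_type_right]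
  simp only [tensLP, ← Finset.mul_sum, (hP _).2, mul_one]
  exact hq.2

lemma aux_tens_cont {K L : Type*} (P : L → K → ℝ) :
    Continuous (fun q : L → ℝ => tensLP q P) := by
  unfold tensLP
  fun_prop

lemma aux_dot {L : Type*} [Fintype L] (q : L → ℝ) (hq : q ∈ stdSimplex ℝ L) (v : L → ℝ) :
    ∑ l, q l * v l ≤ ‖v‖ := by
  calc ∑ l, q l * v l ≤ ∑ l, q l * ‖v‖ := by
        refine Finset.sum_le_sum fun l _ => mul_le_mul_of_nonneg_left ?_ (hq.1 l)
        exact (le_abs_self _).trans (norm_le_pi_norm v l)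
    _ = ‖v‖ := by rw [← Finset.sum_mul, hq.2, one_mul]

lemma aux_sq {L : Type*} [Fintype L] [Nonempty L] (v : L → ℝ) :
    ‖v‖ ^ 2 ≤ ∑ l, (v l) ^ 2 := by
  have h0 : 0 ≤ ∑ l, (v l) ^ 2 := Finset.sum_nonneg fun l _ => sq_nonneg _
  rw [← Real.le_sqrt (norm_nonneg _) h0, pi_norm_le_iff_of_nonneg (Real.sqrt_nonneg _)]
  intro l
  rw [Real.norm_eq_abs]
  refine Real.abs_le_sqrt ?_
  exact Finset.single_le_sum (f := fun l => (v l) ^ 2) (fun i _ => sq_nonneg _) (Finset.mem_univ l)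

/-- If `W` is Lipschitz, `L`-convex, and for every `P` the map `η ↦ W_L^♭(P,η)` is a
viscosity super-solution of `−w(η) + ⟨Dw(η),η⟩ + u_L(P,Dw(η)) ≤ 0` on `ℝ^L`, then at
any point `η₀` of differentiability of `η ↦ W_L^♭(P₀,η)` one has
`q₀ := ∇_η W_L^♭(P₀,η₀) ∈ Δ(L)` and `W(q₀⊗P₀) ≥ u(q₀⊗P₀)`. -/
theorem value_above_u_at_differentiability_points
    {K L : Type*} [Fintype K] [Fintype L] [Nonempty K] [Nonempty L] [DecidableEq L]
    (u : ((K × L) → ℝ) → ℝ) (hu : ContinuousOn u (stdSimplex ℝ (K × L)))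
    (W : ((K × L) → ℝ) → ℝ)
    (hWlip : ∃ C : NNReal, LipschitzOnWith C W (stdSimplex ℝ (K × L)))
    (hWconv : ∀ P : L → K → ℝ, (∀ l, P l ∈ stdSimplex ℝ K) →
      ConvexOn ℝ (stdSimplex ℝ L) (fun q => W (tensLP q P)))
    (hsuper : ∀ P : L → K → ℝ, (∀ l, P l ∈ stdSimplex ℝ K) →
      ∀ φ : (L → ℝ) → ℝ, ContDiff ℝ 1 φ →
      ∀ η : L → ℝ, IsLocalMin (fun z => WflatL W P z - φ z) η →
        -(WflatL W P η) + fderiv ℝ φ η η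
          + u (tensLP (fun l => fderiv ℝ φ η (Pi.single l 1)) P) ≤ 0)
    (P₀ : L → K → ℝ) (hP₀ : ∀ l, P₀ l ∈ stdSimplex ℝ K)
    (η₀ : L → ℝ) (hdiff : DifferentiableAt ℝ (fun η => WflatL W P₀ η) η₀) :
    (fun l => fderiv ℝ (fun η => WflatL W P₀ η) η₀ (Pi.single l 1)) ∈ stdSimplex ℝ L ∧
    u (tensLP (fun l => fderiv ℝ (fun η => WflatL W P₀ η) η₀ (Pi.single l 1)) P₀)
      ≤ W (tensLP (fun l => fderiv ℝ (fun η => WflatL W P₀ η) η₀ (Pi.single l 1)) P₀) := by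
  classical
  obtain ⟨C, hC⟩ := hWlip
  have hmaps : Set.MapsTo (fun q : L → ℝ => tensLP q P₀) (stdSimplex ℝ L)
      (stdSimplex ℝ (K × L)) := fun q hq => aux_tens P₀ hP₀ q hq
  have hgc : ContinuousOn (fun q : L → ℝ => W (tensLP q P₀)) (stdSimplex ℝ L) :=
    hC.continuousOn.comp (aux_tens_cont P₀).continuousOn hmaps
  have huc : ContinuousOn (fun q : L → ℝ => u (tensLP q P₀)) (stdSimplex ℝ L) :=
    hu.comp (aux_tens_cont P₀).continuousOn hmaps
  have hcomp : IsCompact (stdSimplex ℝ L) := isCompact_stdSimplex ℝ L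
  have hne : (stdSimplex ℝ L).Nonempty :=
    ⟨_, single_mem_stdSimplex ℝ (Classical.arbitrary L)⟩
  have hFc : ∀ η : L → ℝ, ContinuousOn (fun q : L → ℝ => W (tensLP q P₀) + ∑ l, q l * η l)
      (stdSimplex ℝ L) := fun η => hgc.add (by fun_prop)
  set f : (L → ℝ) → ℝ := fun η => WflatL W P₀ η with hf
  have hle : ∀ η, ∀ q ∈ stdSimplex ℝ L, f η ≤ W (tensLP q P₀) + ∑ l, q l * η l := by
    intro η q hq
    exact csInf_le (hcomp.bddBelow_image (hFc η)) (Set.mem_image_of_mem _ hq)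
  have hex : ∀ η, ∃ q ∈ stdSimplex ℝ L, f η = W (tensLP q P₀) + ∑ l, q l * η l := by
    intro η
    exact hcomp.exists_sInf_image_eq hne (hFc η)
  have hlip : ∀ η η', f η - f η' ≤ ‖η - η'‖ := by
    intro η η'
    obtain ⟨q, hq, he⟩ := hex η'
    have h1 := hle η q hq
    have h2 := aux_dot q hq (η - η')
    simp only [Pi.sub_apply, mul_sub, Finset.sum_sub_distrib] at h2
    linarith
  have hfc : Continuous f := by
    refine (LipschitzWith.of_le_add (f := f) fun x y => ?_).continuous
    rw [dist_eq_norm]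
    linarith [hlip x y]
  -- any minimizer at `η₀` is the gradient
  have hgrad : ∀ q ∈ stdSimplex ℝ L, f η₀ = W (tensLP q P₀) + ∑ l, q l * η₀ l →
      (fun l => fderiv ℝ f η₀ (Pi.single l 1)) = q := by
    intro q hq he
    funext l
    rw [aux_touch f η₀ q hdiff ?_]
    · simp [Pi.single_apply]
    · refine Eventually.of_forall fun z => ?_
      have := hle z q hq
      show ∑ l, q l * η₀ l - f η₀ ≤ ∑ l, q l * z l - f z
      linarith
  -- approximating points
  have key : ∀ n : ℕ, ∃ η q, q ∈ stdSimplex ℝ L ∧ ‖η - η₀‖ ≤ 1 / ((n : ℝ) + 1) ∧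
      f η = W (tensLP q P₀) + ∑ l, q l * η l ∧ u (tensLP q P₀) ≤ W (tensLP q P₀) := by
    intro n
    let φ : (L → ℝ) → ℝ := fun z => -(((n : ℝ) + 2) * ∑ l, (z l - η₀ l) ^ 2)
    have hφ : ContDiff ℝ 1 φ := by
      simp only [φ]
      fun_prop
    obtain ⟨η, hηB, hη⟩ := (isCompact_closedBall η₀ (1 : ℝ)).exists_isMinOn
      ⟨η₀, Metric.mem_closedBall_self zero_le_one⟩
      ((hfc.sub hφ.continuous).continuousOn)
    have h0 : f η - φ η ≤ f η₀ - φ η₀ := hη (Metric.mem_closedBall_self zero_le_one)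
    have h1 : φ η₀ = 0 := by simp [φ]
    have h2 := hlip η₀ η
    rw [norm_sub_rev] at h2
    have h3 := aux_sq (η - η₀)
    simp only [Pi.sub_apply] at h3
    have hn : (0 : ℝ) ≤ n := Nat.cast_nonneg n
    have h4 : ((n : ℝ) + 2) * ‖η - η₀‖ ^ 2 ≤ ‖η - η₀‖ := by
      have : ((n : ℝ) + 2) * ‖η - η₀‖ ^ 2 ≤ -φ η := by
        simp only [φ, neg_neg]
        exact mul_le_mul_of_nonneg_left h3 (by linarith)
      linarith
    have h5 : ((n : ℝ) + 2) * ‖η - η₀‖ ≤ 1 := by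
      rcases (norm_nonneg (η - η₀)).eq_or_lt with h | h
      · rw [← h]; simp
      · by_contra! hc
        nlinarith
    have h6 : ‖η - η₀‖ < 1 := by nlinarith [norm_nonneg (η - η₀)]
    have hloc : IsLocalMin (fun z => f z - φ z) η := by
      refine hη.isLocalMin (mem_of_superset (Metric.isOpen_ball.mem_nhds ?_)
        Metric.ball_subset_closedBall)
      rwa [Metric.mem_ball, dist_eq_norm]
    obtain ⟨q, hq, he⟩ := hex η
    have hD : ∀ v, fderiv ℝ φ η v = ∑ l, q l * v l := by
      apply aux_touch φ η q (hφ.differentiable one_ne_zero η)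
      filter_upwards [hloc] with z hz
      have := hle z q hq
      linarith
    have hs := hsuper P₀ hP₀ φ hφ η hloc
    have hD2 : (fun l => fderiv ℝ φ η (Pi.single l 1)) = q := by
      funext l
      rw [hD]
      simp [Pi.single_apply]
    rw [hD2, hD] at hs
    change -(f η) + _ + _ ≤ 0 at hs
    refine ⟨η, q, hq, ?_, he, by linarith⟩
    rw [le_div_iff₀ (by linarith)]
    nlinarith [norm_nonneg (η - η₀)]
  choose η q hq hη he hW using key
  obtain ⟨p, hp, s, hs, hlim⟩ := hcomp.tendsto_subseq hq
  have hηlim : Tendsto η atTop (𝓝 η₀) := by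
    rw [tendsto_iff_norm_sub_tendsto_zero]
    exact squeeze_zero (fun _ => norm_nonneg _) hη tendsto_one_div_add_atTop_nhds_zero_nat
  have hηs := hηlim.comp hs.tendsto_atTop
  have hwithin : Tendsto (q ∘ s) atTop (𝓝[stdSimplex ℝ L] p) :=
    tendsto_nhdsWithin_iff.mpr ⟨hlim, Eventually.of_forall fun n => hq _⟩
  have hWl := (hgc p hp).tendsto.comp hwithin
  have hul := (huc p hp).tendsto.comp hwithin
  have hdot : Tendsto (fun n => ∑ l, q (s n) l * η (s n) l) atTop (𝓝 (∑ l, p l * η₀ l)) :=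
    tendsto_finsetSum _ fun l _ =>
      ((tendsto_pi_nhds.mp hlim l).mul (tendsto_pi_nhds.mp hηs l))
  have hfl := (hfc.tendsto η₀).comp hηs
  have heq : f η₀ = W (tensLP p P₀) + ∑ l, p l * η₀ l :=
    tendsto_nhds_unique hfl ((hWl.add hdot).congr fun n => (he (s n)).symm)
  rw [hgrad p hp heq]
  exact ⟨hp, le_of_tendsto_of_tendsto' hul hWl fun n => hW (s n)⟩
end
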